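/- arXiv:2302.00708 — 2 statements merged into one kernel-verified Lean document; each statement's English description precedes it below -/
import Mathlib

section
/- For every natural number n and every B in {28, 94, 182, 204, 226}, the number of 11-regular partitions b_11(242n + B) is even. -/
/-- The number of `m`-regular partitions of `n`, i.e. partitions of `n`
in which no part is divisible by `m`. -/
noncomputable def numRegularPartitions (m n : ℕ) : ℕ :=
  Nat.card {π : n.Partition // ∀ j ∈ π.parts, ¬ m ∣ j}

/-!
Write `f_m = ∏ (1 - X ^ (m i))`, so that the generating function of the 11-regular partitions is
`f₁₁ / f₁`. Modulo 2, the pentagonal number theorem turns `f₁` into the sum of `X ^ ((x² - 1) / 24)`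
over the squares `x² ≡ 1 (mod 24)`. Hence the coefficients of `f₁ f_d` and `f₁³ f_d³` count
representations by the form `x² + d y²`. Multiplication by an element of norm 3, namely `1 + √-2`
and `(1 + √-11) / 2`, compares these counts and gives, modulo 2, the formula
`f₁³ = ∑ X ^ ((x² - 1) / 8)` and the 2-dissection
`even part of f₁ f₁₁ = f₁⁶ + even part of X f₁³ f₁₁³`,
where `even part` extracts the coefficients of even index. Dividing by `f₁` expresses the even part
of `f₁₁ / f₁` as `f₁⁵ + X f₁₁ Q`, with `Q` the odd part of `f₁ f₁₁`. The terms of index `11 k + 3`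
of this sum are those of `f₁⁵`, which vanish unless `11 ∣ 16 k + 1` because `-1` is not a square
modulo 11, plus the even part of `f₁³ f₁₁`, whose coefficient at `k` vanishes unless `16 k + 1` is
a square modulo 11.
-/

open PowerSeries Finset

section Multisection

variable {R : Type*} [CommRing R]

/-- The series `∑ₖ a (p * k + r) Xᵏ` extracted from `∑ₙ a n Xⁿ`. -/
noncomputable def multisection (p r : ℕ) : R⟦X⟧ →ₗ[R] R⟦X⟧ where
  toFun A := mk fun k ↦ coeff (p * k + r) A
  map_add' _ _ := by ext; simp
  map_smul' _ _ := by ext; simp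

@[simp]
lemma coeff_multisection (p r k : ℕ) (A : R⟦X⟧) :
    coeff k (multisection p r A) = coeff (p * k + r) A := by
  simp [multisection]

lemma multisection_multisection (p q r s : ℕ) (A : R⟦X⟧) :
    multisection p r (multisection q s A) = multisection (q * p) (q * r + s) A := by
  ext k
  simp only [coeff_multisection]
  ring_nf

lemma multisection_succ_X_mul (p r : ℕ) (A : R⟦X⟧) :
    multisection p (r + 1) (X * A) = multisection p r A := by
  ext k
  rw [coeff_multisection, coeff_multisection, ← add_assoc, coeff_succ_X_mul]

lemma multisection_succ_zero_X_mul (p : ℕ) (A : R⟦X⟧) :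
    multisection (p + 1) 0 (X * A) = X * multisection (p + 1) p A := by
  ext k
  rcases k with _ | k
  · simp
  · rw [coeff_multisection, coeff_succ_X_mul, coeff_multisection, add_zero, mul_add_one,
      ← add_assoc, coeff_succ_X_mul]

lemma multisection_expand_mul {p r : ℕ} (hp : p ≠ 0) (hr : r < p) (A B : R⟦X⟧) :
    multisection p r (expand p hp A * B) = A * multisection p r B := by
  ext k
  rw [coeff_multisection, coeff_mul, coeff_mul]
  symm
  refine Finset.sum_of_injOn (fun q ↦ (p * q.1, p * q.2 + r)) ?_ ?_ ?_ ?_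
  · rintro ⟨i, j⟩ - ⟨i', j'⟩ - h
    simpa [hp] using h
  · rintro ⟨i, j⟩ hij
    rw [mem_coe, HasAntidiagonal.mem_antidiagonal] at hij ⊢
    rw [← hij]
    ring
  · rintro ⟨i, j⟩ hij hnot
    rw [HasAntidiagonal.mem_antidiagonal] at hij
    refine mul_eq_zero_of_left (coeff_expand_of_not_dvd p hp A ?_) _
    rintro ⟨i, rfl⟩
    have hik : i ≤ k := by
      by_contra! hlt
      have := Nat.mul_le_mul_left p hlt
      grind
    obtain ⟨j', rfl⟩ := Nat.exists_eq_add_of_le hik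
    refine hnot ⟨(i, j'), by simp, ?_⟩
    simp only [Prod.mk.injEq, true_and]
    linarith
  · rintro ⟨i, j⟩ -
    rw [coeff_expand_mul, coeff_multisection]

end Multisection

lemma pow_eq_expand {p : ℕ} [Fact p.Prime] (A : (ZMod p)⟦X⟧) :
    A ^ p = expand p (NeZero.ne p) A := by
  have h := MvPowerSeries.map_frobenius_expand (σ := Unit) p (NeZero.ne p) (f := A)
  rw [← h, ZMod.frobenius_zmod, MvPowerSeries.map_id]
  rfl

section GeneratingFunction

variable (R : Type*) [CommRing R]

lemma numRegularPartitions_eq_card_countRestricted {m : ℕ} (hm : 0 < m) (n : ℕ) :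
    numRegularPartitions m n = #(Nat.Partition.countRestricted n m) := by
  rw [← Nat.Partition.card_restricted_eq_card_countRestricted n hm, numRegularPartitions,
    Nat.Partition.restricted, Nat.card_eq_fintype_card, Fintype.card_subtype]

open scoped PowerSeries.WithPiTopology in
lemma hasProd_one_sub_X_pow_expand [TopologicalSpace R] {m : ℕ} (hm : m ≠ 0) :
    HasProd (fun i ↦ expand m hm (1 - (X : R⟦X⟧) ^ (i + 1)))
      (expand m hm (pentagonalSeries R)) := by
  have h := PowerSeries.WithPiTopology.hasProd_one_sub_X_pow R
  rw [HasProd, PowerSeries.WithPiTopology.tendsto_iff_coeff_tendsto] at h ⊢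
  intro d
  simp_rw [← map_prod, coeff_expand]
  split_ifs
  · exact h _
  · exact tendsto_const_nhds

open scoped PowerSeries.WithPiTopology in
lemma mk_numRegularPartitions_mul_pentagonalSeries {m : ℕ} (hm : m ≠ 0) :
    (mk fun n ↦ (numRegularPartitions m n : R)) * pentagonalSeries R =
      expand m hm (pentagonalSeries R) := by
  let _ : TopologicalSpace R := ⊥
  have _ : DiscreteTopology R := ⟨rfl⟩
  have hm' := Nat.pos_of_ne_zero hm
  have factor (i : ℕ) : (∑ j ∈ range m, (X : R⟦X⟧) ^ ((i + 1) * j)) * (1 - X ^ (i + 1)) =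
      expand m hm (1 - X ^ (i + 1)) := by
    simp_rw [pow_mul, geom_sum_mul_neg, map_sub, map_one, map_pow, expand_X]
    rw [← pow_mul, ← pow_mul, mul_comm]
  have h := (Nat.Partition.hasProd_powerSeriesMk_card_countRestricted R hm').mul
    (PowerSeries.WithPiTopology.hasProd_one_sub_X_pow R)
  simp_rw [factor, ← numRegularPartitions_eq_card_countRestricted hm'] at h
  exact h.unique (hasProd_one_sub_X_pow_expand R hm)

end GeneratingFunction

section SquareSeries

variable (R : Type*) [CommRing R]

/-- The theta-like series `∑ X ^ ((x² - 1) / c)` over the squares `x² ≡ 1 (mod c)`. Modulo `2`,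
the Euler product and its cube are of this form, with `c = 24` and `c = 8`. -/
noncomputable def squareSeries (c : ℕ) : R⟦X⟧ :=
  mk fun n ↦ if IsSquare (c * n + 1) then 1 else 0

/-- The pairs of natural numbers `(x, y)` with `x² + d y² = m` and `x² ≡ y² ≡ 1 (mod c)`. -/
def unitReps (c d m : ℕ) : Set (ℕ × ℕ) :=
  {p | p.1 ^ 2 % c = 1 ∧ p.2 ^ 2 % c = 1 ∧ p.1 ^ 2 + d * p.2 ^ 2 = m}

variable {R}

lemma unitReps_eq_empty {c d m : ℕ} (h : m < d) : unitReps c d m = ∅ := by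
  rw [Set.eq_empty_iff_forall_notMem]
  rintro ⟨x, y⟩ ⟨-, hy, h'⟩
  have hy' : y ≠ 0 := by
    rintro rfl
    simp at hy
  have : d ≤ d * y ^ 2 := Nat.le_mul_of_pos_right d (by positivity)
  lia

@[simp]
lemma coeff_squareSeries (c n : ℕ) :
    coeff n (squareSeries R c) = if IsSquare (c * n + 1) then 1 else 0 := by
  simp [squareSeries]

lemma eq_mul_add_one_iff {c k t : ℕ} (hc : 1 < c) : k = c * t + 1 ↔ k % c = 1 ∧ k / c = t := by
  rw [and_comm, Nat.div_mod_unique (by lia), and_iff_left hc, add_comm, eq_comm]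

lemma ncard_unitReps_eq_ncard_isSquare {c d : ℕ} (hc : 1 < c) (n : ℕ) :
    (unitReps c d (c * n + 1 + d)).ncard = {q : ℕ × ℕ |
      q.1 + d * q.2 = n ∧ IsSquare (c * q.1 + 1) ∧ IsSquare (c * q.2 + 1)}.ncard := by
  refine Set.ncard_congr (fun p _ ↦ (p.1 ^ 2 / c, p.2 ^ 2 / c)) ?_ ?_ ?_
  · rintro ⟨x, y⟩ ⟨hx, hy, h⟩
    have hx' := (eq_mul_add_one_iff hc).2 ⟨hx, rfl⟩
    have hy' := (eq_mul_add_one_iff hc).2 ⟨hy, rfl⟩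
    refine ⟨Nat.eq_of_mul_eq_mul_left (by lia : 0 < c) ?_, ⟨x, ?_⟩, ⟨y, ?_⟩⟩
    · rw [hx', hy'] at h
      linarith
    · rw [← hx', sq]
    · rw [← hy', sq]
  · rintro ⟨x, y⟩ ⟨x', y'⟩ ⟨hx, hy, -⟩ ⟨hx', hy', -⟩ h
    rw [Prod.mk.injEq] at h
    rw [Prod.mk.injEq, ← Nat.pow_left_inj two_ne_zero, ← Nat.pow_left_inj (a := y) two_ne_zero,
      (eq_mul_add_one_iff hc).2 ⟨hx, h.1⟩, (eq_mul_add_one_iff hc).2 ⟨hy, h.2⟩]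
    exact ⟨((eq_mul_add_one_iff hc).2 ⟨hx', rfl⟩).symm, ((eq_mul_add_one_iff hc).2 ⟨hy', rfl⟩).symm⟩
  · rintro ⟨i, j⟩ ⟨rfl, ⟨x, hx⟩, ⟨y, hy⟩⟩
    rw [← sq] at hx hy
    obtain ⟨hx_mod, rfl⟩ := (eq_mul_add_one_iff hc).1 hx.symm
    obtain ⟨hy_mod, rfl⟩ := (eq_mul_add_one_iff hc).1 hy.symm
    exact ⟨(x, y), ⟨hx_mod, hy_mod, by linear_combination -hx - d * hy⟩, rfl⟩

lemma coeff_squareSeries_mul_expand {c d : ℕ} (hc : 1 < c) (hd : d ≠ 0) (n : ℕ) :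
    coeff n (squareSeries R c * expand d hd (squareSeries R c)) =
      ((unitReps c d (c * n + 1 + d)).ncard : R) := by
  classical
  have coeff_mul_coeff (q : ℕ × ℕ) :
      coeff q.1 (squareSeries R c) * coeff q.2 (expand d hd (squareSeries R c)) =
        if IsSquare (c * q.1 + 1) ∧ d ∣ q.2 ∧ IsSquare (c * (q.2 / d) + 1) then 1 else 0 := by
    rw [coeff_expand, coeff_squareSeries, coeff_squareSeries, ite_and, ite_and]
    split_ifs <;> simp
  have hd' := Nat.pos_of_ne_zero hd
  simp_rw [ncard_unitReps_eq_ncard_isSquare hc, coeff_mul, coeff_mul_coeff, Finset.sum_boole,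
    ← Set.ncard_coe_finset]
  congr 1
  symm
  refine Set.ncard_congr (fun q _ ↦ (q.1, d * q.2)) ?_ ?_ ?_
  · rintro ⟨i, j⟩ ⟨h, hi, hj⟩
    rw [mem_coe, mem_filter, HasAntidiagonal.mem_antidiagonal, Nat.mul_div_cancel_left _ hd']
    exact ⟨h, hi, dvd_mul_right _ _, hj⟩
  · rintro ⟨i, j⟩ ⟨i', j'⟩ - - h
    simpa [hd] using h
  · rintro ⟨i, j⟩ h
    rw [mem_coe, mem_filter, HasAntidiagonal.mem_antidiagonal] at h
    obtain ⟨h, hi, ⟨j, rfl⟩, hj⟩ := h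
    rw [Nat.mul_div_cancel_left _ hd'] at hj
    exact ⟨(i, j), ⟨h, hi, hj⟩, rfl⟩
lemma multisection_squareSeries_of_mul_add_one_eq_sq {p c r : ℕ} (hp : p.Prime)
    (h : c * r + 1 = p ^ 2) :
    multisection p r (squareSeries R c) = expand p hp.ne_zero (squareSeries R c) := by
  have hpc : p.Coprime c := by
    rw [hp.coprime_iff_not_dvd]
    intro hpc
    exact hp.not_dvd_one <| (Nat.dvd_add_right (hpc.mul_right r)).1 (h ▸ dvd_pow_self p two_ne_zero)
  have isSquare_iff (s : ℕ) :
      IsSquare (c * (p * s + r) + 1) ↔ p ∣ s ∧ IsSquare (c * (s / p) + 1) := by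
    rw [show c * (p * s + r) + 1 = p * (c * s + p) by linear_combination h]
    constructor
    · rintro ⟨x, hx⟩
      obtain ⟨y, rfl⟩ : p ∣ x := or_self_iff.1 (hp.dvd_mul.1 (hx ▸ dvd_mul_right _ _))
      have hy : c * s + p = p * (y * y) := Nat.eq_of_mul_eq_mul_left hp.pos (by linarith)
      obtain ⟨t, rfl⟩ : p ∣ s :=
        hpc.dvd_of_dvd_mul_left ((Nat.dvd_add_left dvd_rfl).1 (hy ▸ dvd_mul_right _ _))
      rw [Nat.mul_div_cancel_left _ hp.pos]
      exact ⟨dvd_mul_right _ _, y, Nat.eq_of_mul_eq_mul_left hp.pos (by linarith)⟩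
    · rintro ⟨⟨t, rfl⟩, y, hy⟩
      rw [Nat.mul_div_cancel_left _ hp.pos] at hy
      exact ⟨p * y, by linear_combination p ^ 2 * hy⟩
  ext s
  simp only [coeff_multisection, coeff_squareSeries, coeff_expand, isSquare_iff, ite_and]

lemma multisection_squareSeries_eq_zero {p c r : ℕ} (h : ¬ IsSquare ((c * r + 1 : ℕ) : ZMod p)) :
    multisection p r (squareSeries R c) = 0 := by
  ext k
  rw [coeff_multisection, coeff_squareSeries, map_zero, if_neg]
  intro hsq
  apply h
  simpa using hsq.map (Nat.castRingHom (ZMod p))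

lemma coeff_expand_mul_squareSeries_eq_zero {p c n : ℕ} (hp : p ≠ 0) (A : R⟦X⟧)
    (h : ¬ IsSquare ((c * n + 1 : ℕ) : ZMod p)) :
    coeff n (expand p hp A * squareSeries R c) = 0 := by
  rw [← Nat.div_add_mod n p, ← coeff_multisection,
    multisection_expand_mul hp (Nat.mod_lt n (Nat.pos_of_ne_zero hp)),
    multisection_squareSeries_eq_zero (by simpa using h), mul_zero, map_zero]

lemma squareSeries_four : squareSeries R 4 = expand 2 two_ne_zero (squareSeries R 8) := by
  ext n
  rw [coeff_expand]
  split_ifs with hn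
  · obtain ⟨t, rfl⟩ := hn
    simp only [coeff_squareSeries, Nat.mul_div_cancel_left t two_pos]
    ring_nf
  · rw [coeff_squareSeries, if_neg]
    intro hsq
    have hmod : ((4 * n + 1 : ℕ) : ZMod 8) = 5 := by
      obtain ⟨t, rfl⟩ := Nat.odd_iff.2 (Nat.two_dvd_ne_zero.1 hn)
      rw [show 4 * (2 * t + 1) + 1 = 8 * t + 5 by ring, Nat.cast_add, Nat.cast_mul,
        ZMod.natCast_self, zero_mul, zero_add, Nat.cast_ofNat]
    have := hsq.map (Nat.castRingHom (ZMod 8))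
    rw [Nat.coe_castRingHom, hmod] at this
    revert this
    decide

end SquareSeries

lemma sq_mod_eight_eq_one_iff (a : ℕ) : a ^ 2 % 8 = 1 ↔ a % 2 = 1 := by
  have h : a % 8 < 8 := Nat.mod_lt _ (by norm_num)
  rw [Nat.pow_mod, ← Nat.mod_mod_of_dvd a (by norm_num : 2 ∣ 8)]
  interval_cases a % 8 <;> decide

lemma sq_mod_twentyFour_eq_one_iff (a : ℕ) : a ^ 2 % 24 = 1 ↔ a % 6 = 1 ∨ a % 6 = 5 := by
  have h : a % 24 < 24 := Nat.mod_lt _ (by norm_num)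
  rw [Nat.pow_mod, ← Nat.mod_mod_of_dvd a (by norm_num : 6 ∣ 24)]
  interval_cases a % 24 <;> decide

lemma mem_range_pentagonal_iff_isSquare (n : ℕ) :
    n ∈ Set.range pentagonal ↔ IsSquare (24 * n + 1) := by
  constructor
  · rintro ⟨k, rfl⟩
    refine ⟨(6 * k - 1).natAbs, ?_⟩
    zify
    rw [← sq, sq_abs]
    linear_combination 12 * two_mul_natCast_pentagonal k
  · rintro ⟨x, hx⟩
    obtain ⟨k, hk⟩ : ∃ k : ℤ, (6 * k - 1) ^ 2 = (x : ℤ) ^ 2 := by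
      rcases (sq_mod_twentyFour_eq_one_iff x).1 (by lia) with h | h
      · exact ⟨-(x / 6), by rw [sq_eq_sq_iff_eq_or_eq_neg]; lia⟩
      · exact ⟨(x + 1) / 6, by rw [sq_eq_sq_iff_eq_or_eq_neg]; lia⟩
    refine ⟨k, ?_⟩
    zify at hx ⊢
    linarith [two_mul_natCast_pentagonal k]

lemma pentagonalSeries_zmod_two : pentagonalSeries (ZMod 2) = squareSeries (ZMod 2) 24 := by
  ext n
  have h := coeff_pentagonalSeries_eq_zero_iff (R := ZMod 2) (n := n)
  rw [mem_range_pentagonal_iff_isSquare, not_iff_not.symm, not_not] at h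
  rw [coeff_squareSeries]
  split_ifs with hn
  · exact Fin.eq_one_of_ne_zero _ (h.2 hn)
  · exact of_not_not (hn ∘ h.1)

section SignedReps

/-- The integral representations of `m` by the quadratic form `x² + d y²`. -/
def intReps (d m : ℕ) : Set (ℤ × ℤ) :=
  {p | p.1 ^ 2 + d * p.2 ^ 2 = m}

variable {d m : ℕ}

lemma mem_intReps {x y : ℤ} : (x, y) ∈ intReps d m ↔ x ^ 2 + d * y ^ 2 = m := Iff.rfl

lemma neg_fst_mem_intReps {x y : ℤ} : (-x, y) ∈ intReps d m ↔ (x, y) ∈ intReps d m := by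
  simp only [mem_intReps, neg_sq]

lemma neg_snd_mem_intReps {x y : ℤ} : (x, -y) ∈ intReps d m ↔ (x, y) ∈ intReps d m := by
  simp only [mem_intReps, neg_sq]

lemma neg_mem_intReps {p : ℤ × ℤ} : -p ∈ intReps d m ↔ p ∈ intReps d m :=
  neg_fst_mem_intReps.trans neg_snd_mem_intReps

lemma finite_intReps (hd : d ≠ 0) : (intReps d m).Finite := by
  refine ((Set.finite_Icc (-m : ℤ) m).prod (Set.finite_Icc (-m : ℤ) m)).subset ?_
  rintro ⟨x, y⟩ h
  rw [mem_intReps] at h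
  have hd' : (1 : ℤ) ≤ d := by exact_mod_cast Nat.one_le_iff_ne_zero.2 hd
  have hy : y ^ 2 ≤ d * y ^ 2 := le_mul_of_one_le_left (sq_nonneg y) hd'
  refine ⟨abs_le.1 ?_, abs_le.1 ?_⟩
  · linarith [sq_abs x, Int.le_self_sq |x|, sq_nonneg y]
  · linarith [sq_abs y, Int.le_self_sq |y|, sq_nonneg x]

lemma ncard_sep_add_ncard_sep_not {α : Type*} {S : Set α} (hS : S.Finite) (P : α → Prop) :
    {a ∈ S | P a}.ncard + {a ∈ S | ¬ P a}.ncard = S.ncard :=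
  Set.ncard_inter_add_ncard_sdiff_eq_ncard S {a | P a} hS

lemma ncard_eq_two_mul_ncard_sep {α : Type*} {S : Set α} {P : α → Prop} {f : α → α}
    (hS : S.Finite) (hf : f.Involutive) (hfS : ∀ a ∈ S, f a ∈ S)
    (hfP : ∀ a ∈ S, P (f a) ↔ ¬ P a) : S.ncard = 2 * {a ∈ S | P a}.ncard := by
  have himage : f '' {a ∈ S | P a} = {a ∈ S | ¬ P a} := by
    rw [hf.image_eq_preimage_symm]
    ext a
    exact ⟨fun ⟨h, h'⟩ ↦ by grind [hf a], fun ⟨h, h'⟩ ↦ ⟨hfS a h, (hfP a h).2 h'⟩⟩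
  rw [← ncard_sep_add_ncard_sep_not hS P, ← himage, Set.ncard_image_of_injective _ hf.injective,
    two_mul]

lemma four_dvd_ncard_of_neg_mem {S : Set (ℤ × ℤ)} (hS : S.Finite)
    (neg_fst : ∀ p ∈ S, (-p.1, p.2) ∈ S) (neg_snd : ∀ p ∈ S, (p.1, -p.2) ∈ S)
    (ne_zero : ∀ p ∈ S, p.1 ≠ 0 ∧ p.2 ≠ 0) : 4 ∣ S.ncard := by
  have h₁ := ncard_eq_two_mul_ncard_sep (P := fun p ↦ 0 < p.1) (f := fun p ↦ (-p.1, p.2)) hS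
    (fun p ↦ by simp) neg_fst (fun p hp ↦ by grind)
  have h₂ := ncard_eq_two_mul_ncard_sep (S := {p ∈ S | 0 < p.1}) (P := fun p ↦ 0 < p.2)
    (f := fun p ↦ (p.1, -p.2)) (hS.sep _) (fun p ↦ by simp)
    (fun p hp ↦ ⟨neg_snd p hp.1, hp.2⟩) (fun p hp ↦ by grind)
  lia

-- Above each `(a, b) ∈ P` lie exactly two elements of `S`, of the form `(x, y)` and `(-x, -y)`.
lemma ncard_eq_two_mul_of_exists_unique_sign {S : Set (ℤ × ℤ)} {P : Set (ℕ × ℕ)} (hS : S.Finite)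
    (neg_mem : ∀ p ∈ S, -p ∈ S) (natAbs_mem : ∀ p ∈ S, (p.1.natAbs, p.2.natAbs) ∈ P)
    (snd_pos : ∀ p ∈ P, 0 < p.2)
    (sign : ∀ x y : ℤ, (x.natAbs, y.natAbs) ∈ P → ((-x, y) ∈ S ↔ (x, y) ∉ S)) :
    S.ncard = 2 * P.ncard := by
  rw [ncard_eq_two_mul_ncard_sep (P := fun p ↦ 0 < p.2) hS neg_involutive neg_mem
    fun p hp ↦ by have := snd_pos _ (natAbs_mem p hp); simp only [Prod.snd_neg]; lia]
  congr 1
  refine Set.ncard_congr (fun p _ ↦ (p.1.natAbs, p.2.natAbs)) (fun p hp ↦ natAbs_mem p hp.1) ?_ ?_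
  · rintro ⟨x, y⟩ ⟨x', y'⟩ ⟨h, hy⟩ ⟨h', hy'⟩ heq
    simp only [Prod.mk.injEq] at heq hy hy'
    obtain rfl : y = y' := by lia
    obtain rfl | rfl := Int.natAbs_eq_natAbs_iff.1 heq.1
    · rfl
    · exact absurd h' ((sign _ _ (natAbs_mem _ h')).1 h)
  · rintro ⟨a, b⟩ h
    have hb := snd_pos _ h
    by_cases hab : ((a : ℤ), (b : ℤ)) ∈ S
    · exact ⟨(a, b), ⟨hab, by simpa using hb⟩, by simp⟩
    · exact ⟨(-a, b), ⟨(sign a b h).2 hab, by simpa using hb⟩, by simp⟩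

lemma natAbs_mem_unitReps {c : ℕ} {x y : ℤ} :
    (x.natAbs, y.natAbs) ∈ unitReps c d m ↔
      (x.natAbs ^ 2 % c = 1 ∧ y.natAbs ^ 2 % c = 1) ∧ (x, y) ∈ intReps d m := by
  rw [mem_intReps, and_assoc, ← Int.natAbs_sq x, ← Int.natAbs_sq y]
  norm_cast

lemma ncard_intReps_odd_eq_two_mul_ncard_unitReps (hd : d ≠ 0) :
    {p ∈ intReps d m | ¬ 2 ∣ p.2 ∧ 4 ∣ p.1 - p.2}.ncard = 2 * (unitReps 8 d m).ncard := by
  refine ncard_eq_two_mul_of_exists_unique_sign ((finite_intReps hd).sep _) ?_ ?_ ?_ ?_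
  · rintro p ⟨h, h'⟩
    exact ⟨neg_mem_intReps.2 h, by simp only [Prod.fst_neg, Prod.snd_neg]; lia⟩
  · rintro ⟨x, y⟩ ⟨h, h'⟩
    simp only [natAbs_mem_unitReps, sq_mod_eight_eq_one_iff]
    exact ⟨by lia, h⟩
  · rintro ⟨a, b⟩ ⟨-, hb, -⟩
    rw [sq_mod_eight_eq_one_iff] at hb
    lia
  · intro x y h
    simp only [natAbs_mem_unitReps, sq_mod_eight_eq_one_iff] at h
    simp only [Set.mem_sep_iff, neg_fst_mem_intReps, h.2, true_and]
    lia

lemma ncard_intReps_modEq_two_mul_ncard_unitReps (hd : d ≠ 0) :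
    {p ∈ intReps d m | ¬ 2 ∣ p.2 ∧ 6 ∣ p.1 - p.2}.ncard ≡ 2 * (unitReps 24 d m).ncard
      [MOD 4] := by
  set S := {p ∈ intReps d m | ¬ 2 ∣ p.2 ∧ 6 ∣ p.1 - p.2}
  have hS : S.Finite := (finite_intReps hd).sep _
  have h_dvd : 4 ∣ {p ∈ S | 3 ∣ p.2}.ncard := by
    refine four_dvd_ncard_of_neg_mem (hS.sep _) ?_ ?_ ?_
    · rintro ⟨x, y⟩ ⟨⟨h, h'⟩, h₃⟩
      exact ⟨⟨neg_fst_mem_intReps.2 h, by lia⟩, h₃⟩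
    · rintro ⟨x, y⟩ ⟨⟨h, h'⟩, h₃⟩
      exact ⟨⟨neg_snd_mem_intReps.2 h, by lia⟩, by lia⟩
    · rintro ⟨x, y⟩ ⟨⟨_, h'⟩, h₃⟩
      lia
  have mem_sep (x y : ℤ) : (x, y) ∈ {p ∈ S | ¬ 3 ∣ p.2} ↔
      ((x, y) ∈ intReps d m ∧ ¬ 2 ∣ y ∧ 6 ∣ x - y) ∧ ¬ 3 ∣ y := Iff.rfl
  have h_not_dvd : {p ∈ S | ¬ 3 ∣ p.2}.ncard = 2 * (unitReps 24 d m).ncard := by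
    refine ncard_eq_two_mul_of_exists_unique_sign (hS.sep _) ?_ ?_ ?_ ?_
    · rintro p ⟨⟨h, h'⟩, h₃⟩
      exact ⟨⟨neg_mem_intReps.2 h, by simp only [Prod.fst_neg, Prod.snd_neg]; lia⟩,
        by simpa using h₃⟩
    · rintro ⟨x, y⟩ ⟨⟨h, h'⟩, h₃⟩
      simp only [natAbs_mem_unitReps, sq_mod_twentyFour_eq_one_iff]
      exact ⟨by lia, h⟩
    · rintro ⟨a, b⟩ ⟨-, hb, -⟩
      rw [sq_mod_twentyFour_eq_one_iff] at hb
      lia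
    · intro x y h
      simp only [natAbs_mem_unitReps, sq_mod_twentyFour_eq_one_iff] at h
      simp only [mem_sep, neg_fst_mem_intReps, h.2, true_and]
      lia
  rw [← ncard_sep_add_ncard_sep_not hS (3 ∣ ·.2), h_not_dvd]
  simpa using h_dvd

lemma ncard_intReps_snd_eq_zero (hm : m ≠ 0) :
    {p ∈ intReps d m | p.2 = 0}.ncard = 2 * (if IsSquare m then 1 else 0) := by
  have mem_iff (x y : ℤ) : (x, y) ∈ {p ∈ intReps d m | p.2 = 0} ↔ x ^ 2 = m ∧ y = 0 := by
    simp +contextual [mem_intReps, and_congr_left_iff]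
  split_ifs with hsq
  · obtain ⟨r, rfl⟩ := hsq
    have hr : (r : ℤ) ≠ -r := by grind
    rw [mul_one, ← Set.ncard_pair (a := ((r : ℤ), (0 : ℤ))) (b := (-r, 0)) (by simpa using hr)]
    congr 1
    ext ⟨x, y⟩
    rw [mem_iff, Nat.cast_mul, ← sq, sq_eq_sq_iff_eq_or_eq_neg]
    simp only [Set.mem_insert_iff, Set.mem_singleton_iff, Prod.mk.injEq]
    tauto
  · suffices hempty : {p ∈ intReps d m | p.2 = 0} = ∅ by rw [hempty, Set.ncard_empty]
    rw [Set.eq_empty_iff_forall_notMem]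
    rintro ⟨x, y⟩ h
    refine hsq ⟨x.natAbs, ?_⟩
    rw [← sq]
    zify
    rw [sq_abs, ((mem_iff x y).1 h).1]

lemma ncard_intReps_modEq_two_mul_ite_isSquare (hd : d ≠ 0) (hm : m % 2 = 1) :
    {p ∈ intReps d m | ¬ 2 ∣ p.1 ∧ 2 ∣ p.2}.ncard ≡ 2 * (if IsSquare m then 1 else 0)
      [MOD 4] := by
  set S := {p ∈ intReps d m | ¬ 2 ∣ p.1 ∧ 2 ∣ p.2}
  have hS : S.Finite := (finite_intReps hd).sep _
  have h_ne : 4 ∣ {p ∈ S | ¬ p.2 = 0}.ncard := by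
    refine four_dvd_ncard_of_neg_mem (hS.sep _) ?_ ?_ ?_
    · rintro ⟨x, y⟩ ⟨⟨h, h'⟩, h₀⟩
      exact ⟨⟨neg_fst_mem_intReps.2 h, by lia⟩, h₀⟩
    · rintro ⟨x, y⟩ ⟨⟨h, h'⟩, h₀⟩
      exact ⟨⟨neg_snd_mem_intReps.2 h, by lia⟩, by lia⟩
    · rintro ⟨x, y⟩ ⟨⟨_, h'⟩, h₀⟩
      lia
  have h_eq : {p ∈ S | p.2 = 0} = {p ∈ intReps d m | p.2 = 0} := by
    ext ⟨x, y⟩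
    constructor
    · rintro ⟨⟨h, -⟩, h₀⟩
      exact ⟨h, h₀⟩
    · rintro ⟨h, rfl : y = 0⟩
      refine ⟨⟨h, fun hx ↦ ?_, dvd_zero 2⟩, rfl⟩
      have hxm : x ^ 2 = m := by simpa [mem_intReps] using h
      have h2m : (2 : ℤ) ∣ m := hxm ▸ dvd_pow hx two_ne_zero
      lia
  rw [← ncard_sep_add_ncard_sep_not hS (·.2 = 0), h_eq, ncard_intReps_snd_eq_zero (by lia)]
  simpa using h_ne

-- The bijection is multiplication of `x + y √-2` by `1 + √-2`, which has norm 3.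
lemma ncard_intReps_two_three_mul :
    {p ∈ intReps 2 (3 * m) | ¬ 2 ∣ p.2 ∧ 6 ∣ p.1 - p.2}.ncard =
      {p ∈ intReps 2 m | ¬ 2 ∣ p.1 ∧ 2 ∣ p.2}.ncard := by
  symm
  refine Set.ncard_congr (fun p _ ↦ (p.1 - 2 * p.2, p.1 + p.2)) ?_ ?_ ?_
  · rintro ⟨x, y⟩ ⟨h, h'⟩
    rw [mem_intReps] at h
    refine ⟨?_, by lia⟩
    rw [mem_intReps]
    push_cast at h ⊢
    linear_combination 3 * h
  · rintro ⟨x, y⟩ ⟨x', y'⟩ - - h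
    grind
  · rintro ⟨a, b⟩ ⟨h, h'⟩
    obtain ⟨y, rfl⟩ : ∃ y, a = b - 3 * y := ⟨(b - a) / 3, by lia⟩
    rw [mem_intReps] at h
    refine ⟨(b - y, y), ⟨?_, by lia⟩, by grind⟩
    rw [mem_intReps]
    push_cast at h ⊢
    linarith

-- The bijection is division of `a + b √-11` by `(1 + √-11) / 2`, which has norm 3.
lemma ncard_intReps_eleven_twelve_mul :
    {p ∈ intReps 11 (12 * m) | ¬ 2 ∣ p.2 ∧ 6 ∣ p.1 - p.2}.ncard =
      {p ∈ intReps 11 (4 * m) | 4 ∣ p.1 + p.2 - 2}.ncard := by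
  refine Set.ncard_congr
    (fun p _ ↦ (2 * p.2 - (p.2 - p.1) / 6, (p.2 - p.1) / 6)) ?_ ?_ ?_
  · rintro ⟨a, b⟩ ⟨h, h'⟩
    obtain ⟨y, rfl⟩ : ∃ y, a = b - 6 * y := ⟨(b - a) / 6, by lia⟩
    rw [mem_intReps] at h
    have hy : (b - (b - 6 * y)) / 6 = y := by lia
    simp only [hy]
    refine ⟨?_, by lia⟩
    rw [mem_intReps]
    push_cast at h ⊢
    linarith
  · rintro ⟨a, b⟩ ⟨a', b'⟩ ⟨-, h⟩ ⟨-, h'⟩ heq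
    grind
  · rintro ⟨x, y⟩ ⟨h, h'⟩
    obtain ⟨b, rfl⟩ : ∃ b, x = 2 * b - y := ⟨(x + y) / 2, by lia⟩
    rw [mem_intReps] at h
    refine ⟨(b - 6 * y, b), ⟨?_, by lia⟩, by grind⟩
    rw [mem_intReps]
    push_cast at h ⊢
    linarith

lemma ncard_unitReps_two_three_mul (hm : m % 2 = 1) :
    (unitReps 24 2 (3 * m)).ncard ≡ if IsSquare m then 1 else 0 [MOD 2] := by
  refine Nat.ModEq.mul_left_cancel' (c := 2) two_ne_zero ?_
  calc 2 * (unitReps 24 2 (3 * m)).ncard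
    _ ≡ {p ∈ intReps 2 (3 * m) | ¬ 2 ∣ p.2 ∧ 6 ∣ p.1 - p.2}.ncard [MOD 2 * 2] :=
      (ncard_intReps_modEq_two_mul_ncard_unitReps two_ne_zero).symm
    _ = {p ∈ intReps 2 m | ¬ 2 ∣ p.1 ∧ 2 ∣ p.2}.ncard := ncard_intReps_two_three_mul
    _ ≡ 2 * (if IsSquare m then 1 else 0) [MOD 2 * 2] :=
      ncard_intReps_modEq_two_mul_ite_isSquare two_ne_zero hm

lemma ncard_intReps_eleven_four_mul_even (hm : m % 4 = 1) :
    {p ∈ intReps 11 (4 * m) | 4 ∣ p.1 + p.2 - 2 ∧ 2 ∣ p.2}.ncard =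
      {p ∈ intReps 11 m | ¬ 2 ∣ p.1 ∧ 2 ∣ p.2}.ncard := by
  symm
  refine Set.ncard_congr (fun p _ ↦ (2 * p.1, 2 * p.2)) ?_ ?_ ?_
  · rintro ⟨x, y⟩ ⟨h, h'⟩
    rw [mem_intReps] at h
    refine ⟨?_, by lia⟩
    rw [mem_intReps]
    push_cast at h ⊢
    linarith
  · rintro ⟨x, y⟩ ⟨x', y'⟩ - - h
    grind
  · rintro ⟨x, y⟩ ⟨h, h', y, rfl⟩
    obtain ⟨x, rfl⟩ : ∃ z, x = 2 * z := ⟨x / 2, by lia⟩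
    rw [mem_intReps] at h
    have hxy : x ^ 2 + 11 * y ^ 2 = m := by
      push_cast at h
      linarith
    have hy : Even y := by
      by_contra hy
      have hx : Even x := by grind
      have hx4 : 2 ^ 2 ∣ x ^ 2 := pow_dvd_pow_of_dvd hx.two_dvd 2
      have hy4 := Int.sq_mod_four_eq_one_of_odd (Int.not_even_iff_odd.1 hy)
      lia
    exact ⟨(x, y), ⟨hxy, by grind⟩, rfl⟩

lemma ncard_intReps_eleven_four_mul (hm : m % 4 = 1) :
    {p ∈ intReps 11 (4 * m) | 4 ∣ p.1 + p.2 - 2}.ncard =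
      {p ∈ intReps 11 m | ¬ 2 ∣ p.1 ∧ 2 ∣ p.2}.ncard +
        {p ∈ intReps 11 (4 * m) | ¬ 2 ∣ p.2 ∧ 4 ∣ p.1 - p.2}.ncard := by
  rw [← ncard_intReps_eleven_four_mul_even hm,
    ← ncard_sep_add_ncard_sep_not ((finite_intReps (by norm_num)).sep _) (2 ∣ ·.2)]
  congr 2 <;> ext ⟨x, y⟩ <;> simp only [Set.mem_sep_iff, and_assoc]
  refine and_congr_right fun _ ↦ ?_
  lia

lemma ncard_unitReps_eleven_twelve_mul (hm : m % 4 = 1) :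
    (unitReps 24 11 (12 * m)).ncard ≡
      (if IsSquare m then 1 else 0) + (unitReps 8 11 (4 * m)).ncard [MOD 2] := by
  have h11 : 11 ≠ 0 := by norm_num
  refine Nat.ModEq.mul_left_cancel' (c := 2) two_ne_zero ?_
  calc 2 * (unitReps 24 11 (12 * m)).ncard
    _ ≡ {p ∈ intReps 11 (12 * m) | ¬ 2 ∣ p.2 ∧ 6 ∣ p.1 - p.2}.ncard [MOD 2 * 2] :=
      (ncard_intReps_modEq_two_mul_ncard_unitReps h11).symm
    _ = {p ∈ intReps 11 m | ¬ 2 ∣ p.1 ∧ 2 ∣ p.2}.ncard +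
        {p ∈ intReps 11 (4 * m) | ¬ 2 ∣ p.2 ∧ 4 ∣ p.1 - p.2}.ncard := by
      rw [ncard_intReps_eleven_twelve_mul, ncard_intReps_eleven_four_mul hm]
    _ = {p ∈ intReps 11 m | ¬ 2 ∣ p.1 ∧ 2 ∣ p.2}.ncard + 2 * (unitReps 8 11 (4 * m)).ncard := by
      rw [ncard_intReps_odd_eq_two_mul_ncard_unitReps h11]
    _ ≡ 2 * (if IsSquare m then 1 else 0) + 2 * (unitReps 8 11 (4 * m)).ncard [MOD 2 * 2] :=
      (ncard_intReps_modEq_two_mul_ite_isSquare h11 (by lia)).add_right _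
    _ = 2 * ((if IsSquare m then 1 else 0) + (unitReps 8 11 (4 * m)).ncard) := by ring

end SignedReps

lemma sq_dvd_sq_add_sq {p a b : ℕ} (hp : p.Prime) (hp₄ : p % 4 = 3) (h : p ∣ a ^ 2 + b ^ 2) :
    p ^ 2 ∣ a ^ 2 + b ^ 2 := by
  have : Fact p.Prime := ⟨hp⟩
  have hab : (a : ZMod p) ^ 2 + (b : ZMod p) ^ 2 = 0 := by
    exact_mod_cast (ZMod.natCast_eq_zero_iff _ p).2 h
  have hb : p ∣ b := by
    rw [← ZMod.natCast_eq_zero_iff]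
    by_contra hb
    exact ZMod.mod_four_ne_three_of_sq_eq_neg_sq' hb (eq_neg_of_add_eq_zero_left hab) hp₄
  have ha : p ∣ a := hp.dvd_of_dvd_pow ((Nat.dvd_add_left (dvd_pow hb two_ne_zero)).1 h)
  exact dvd_add (pow_dvd_pow_of_dvd ha 2) (pow_dvd_pow_of_dvd hb 2)

section EulerProduct

local notation "f₁" => pentagonalSeries (ZMod 2)
local notation "f₁₁" => expand 11 (NeZero.ne 11) f₁

lemma pentagonalSeries_pow_three : f₁ ^ 3 = squareSeries (ZMod 2) 8 := by
  rw [pow_succ', pow_eq_expand, pentagonalSeries_zmod_two]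
  ext n
  rw [coeff_squareSeries_mul_expand (by norm_num), show 24 * n + 1 + 2 = 3 * (8 * n + 1) by ring,
    (ZMod.natCast_eq_natCast_iff _ _ 2).2 (ncard_unitReps_two_three_mul (by lia)),
    Nat.cast_ite, Nat.cast_one, Nat.cast_zero, coeff_squareSeries]

lemma pentagonalSeries_pow_six : f₁ ^ 6 = squareSeries (ZMod 2) 4 := by
  rw [squareSeries_four, ← pow_eq_expand, ← pentagonalSeries_pow_three, ← pow_mul]

lemma coeff_pentagonalSeries_mul_expand_pow_three (n : ℕ) :
    coeff n ((f₁ * f₁₁) ^ 3) = ((unitReps 8 11 (8 * n + 12)).ncard : ZMod 2) := by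
  rw [mul_pow, ← map_pow, pentagonalSeries_pow_three,
    coeff_squareSeries_mul_expand (by norm_num), add_assoc]

lemma multisection_two_zero_pentagonalSeries_mul_expand :
    multisection 2 0 (f₁ * f₁₁) = f₁ ^ 6 + multisection 2 0 (X * (f₁ * f₁₁) ^ 3) := by
  have coeff_X_mul (n : ℕ) : coeff (2 * n) (X * (f₁ * f₁₁) ^ 3) =
      ((unitReps 8 11 (4 * (4 * n + 1))).ncard : ZMod 2) := by
    rcases n with _ | n
    · simp [unitReps_eq_empty]
    · rw [mul_add_one, coeff_succ_X_mul, coeff_pentagonalSeries_mul_expand_pow_three]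
      ring_nf
  rw [pentagonalSeries_pow_six]
  ext n
  rw [map_add, coeff_multisection, coeff_multisection, add_zero, coeff_X_mul,
    pentagonalSeries_zmod_two, coeff_squareSeries_mul_expand (by norm_num),
    show 24 * (2 * n) + 1 + 11 = 12 * (4 * n + 1) by ring,
    (ZMod.natCast_eq_natCast_iff _ _ 2).2 (ncard_unitReps_eleven_twelve_mul (by lia)),
    Nat.cast_add, Nat.cast_ite, Nat.cast_one, Nat.cast_zero, coeff_squareSeries]

lemma pentagonalSeries_zmod_two_ne_zero : f₁ ≠ 0 := by
  intro h
  simpa [pentagonalSeries_zmod_two] using congrArg (coeff 0) h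

lemma multisection_two_zero_of_mul_eq {B : (ZMod 2)⟦X⟧} (hB : B * f₁ = f₁₁) :
    multisection 2 0 B = f₁ ^ 5 + X * (f₁₁ * multisection 2 1 (f₁ * f₁₁)) := by
  have hX : multisection 2 0 (X * (f₁ * f₁₁) ^ 3) =
      X * (f₁ * f₁₁ * multisection 2 1 (f₁ * f₁₁)) := by
    rw [multisection_succ_zero_X_mul, pow_succ, pow_eq_expand]
    exact congrArg (X * ·) (multisection_expand_mul _ one_lt_two ..)
  have hf : f₁ * multisection 2 0 B = multisection 2 0 (f₁ * f₁₁) := by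
    rw [← multisection_expand_mul two_ne_zero two_pos, ← pow_eq_expand, ← hB]
    ring_nf
  refine mul_left_cancel₀ pentagonalSeries_zmod_two_ne_zero ?_
  calc f₁ * multisection 2 0 B
    _ = multisection 2 0 (f₁ * f₁₁) := hf
    _ = f₁ ^ 6 + X * (f₁ * f₁₁ * multisection 2 1 (f₁ * f₁₁)) := by
      rw [multisection_two_zero_pentagonalSeries_mul_expand, hX]
    _ = f₁ * (f₁ ^ 5 + X * (f₁₁ * multisection 2 1 (f₁ * f₁₁))) := by ring

lemma multisection_eleven_five_pentagonalSeries : multisection 11 5 f₁ = f₁₁ := by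
  rw [pentagonalSeries_zmod_two]
  exact multisection_squareSeries_of_mul_add_one_eq_sq Nat.prime_eleven (by norm_num)

lemma multisection_eleven_three_two_zero {B : (ZMod 2)⟦X⟧} (hB : B * f₁ = f₁₁) :
    multisection 11 3 (multisection 2 0 B) =
      multisection 11 3 (f₁ ^ 5) + multisection 2 0 (f₁₁ * squareSeries (ZMod 2) 8) := by
  have h₅ : multisection 11 5 (f₁ * f₁₁) = f₁ * f₁₁ := by
    rw [mul_comm f₁ f₁₁, multisection_expand_mul _ (by norm_num),
      multisection_eleven_five_pentagonalSeries, mul_comm]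
  rw [multisection_two_zero_of_mul_eq hB, map_add]
  congr 1
  calc multisection 11 3 (X * (f₁₁ * multisection 2 1 (f₁ * f₁₁)))
    _ = multisection 11 2 (f₁₁ * multisection 2 1 (f₁ * f₁₁)) := multisection_succ_X_mul ..
    _ = f₁ * multisection 11 2 (multisection 2 1 (f₁ * f₁₁)) :=
      multisection_expand_mul _ (by norm_num) ..
    _ = f₁ * multisection 2 0 (multisection 11 5 (f₁ * f₁₁)) := by
      simp_rw [multisection_multisection]
    _ = multisection 2 0 (f₁ ^ 2 * (f₁ * f₁₁)) := by
      rw [h₅, pow_eq_expand, multisection_expand_mul _ two_pos]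
    _ = multisection 2 0 (f₁₁ * squareSeries (ZMod 2) 8) := by
      rw [← pentagonalSeries_pow_three]
      ring_nf

lemma coeff_pentagonalSeries_pow_five {k : ℕ} (hk : ¬ 11 ∣ 16 * k + 1) :
    coeff (11 * k + 3) (f₁ ^ 5) = 0 := by
  have hf : f₁ ^ 5 = f₁ * expand 4 four_ne_zero f₁ := by
    calc f₁ ^ 5
      _ = f₁ * (f₁ ^ 2) ^ 2 := by ring
      _ = f₁ * expand 4 four_ne_zero f₁ := by
        rw [pow_eq_expand, pow_eq_expand, ← expand_mul]
  have hempty : unitReps 24 4 (24 * (11 * k + 3) + 1 + 4) = ∅ := by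
    rw [Set.eq_empty_iff_forall_notMem]
    rintro ⟨x, y⟩ ⟨-, -, h⟩
    have h_dvd := sq_dvd_sq_add_sq (a := x) (b := 2 * y) Nat.prime_eleven rfl (by lia)
    lia
  rw [hf, pentagonalSeries_zmod_two, coeff_squareSeries_mul_expand (by norm_num), hempty,
    Set.ncard_empty, Nat.cast_zero]

theorem even_numRegularPartitions_eleven {k : ℕ} (hk : ¬ IsSquare ((16 * k + 1 : ℕ) : ZMod 11)) :
    Even (numRegularPartitions 11 (2 * (11 * k + 3))) := by
  have hk_dvd : ¬ 11 ∣ 16 * k + 1 := by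
    intro h
    rw [(ZMod.natCast_eq_zero_iff _ 11).2 h] at hk
    exact hk IsSquare.zero
  have hk_sq : ¬ IsSquare ((8 * (2 * k) + 1 : ℕ) : ZMod 11) := by rwa [← mul_assoc]
  have h := congrArg (coeff k) (multisection_eleven_three_two_zero
    (mk_numRegularPartitions_mul_pentagonalSeries (ZMod 2) (NeZero.ne 11)))
  rw [map_add, coeff_multisection, coeff_multisection, coeff_multisection, coeff_multisection,
    coeff_pentagonalSeries_pow_five hk_dvd, add_zero, add_zero,
    coeff_expand_mul_squareSeries_eq_zero _ _ hk_sq, coeff_mk, zero_add] at h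
  exact ZMod.natCast_eq_zero_iff_even.1 h

end EulerProduct

theorem stmt_12 (n : ℕ) :
    ∀ B ∈ ({28, 94, 182, 204, 226} : Finset ℕ),
      Even (numRegularPartitions 11 (242 * n + B)) := by
  intro B hB
  obtain ⟨r, -, rfl, hr⟩ : ∃ r ∈ range 11, B = 22 * r + 6 ∧
      ¬ IsSquare ((16 * r + 1 : ℕ) : ZMod 11) := by
    revert B
    decide
  rw [show 242 * n + (22 * r + 6) = 2 * (11 * (11 * n + r) + 3) by ring]
  apply even_numRegularPartitions_eleven
  have hcast : ((16 * (11 * n + r) + 1 : ℕ) : ZMod 11) = (16 * r + 1 : ℕ) :=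
    (ZMod.natCast_eq_natCast_iff' _ _ _).2 (by lia)
  rwa [hcast]
end

section
/- For every natural number n, both b_40(25n + 9) and b_40(25n + 19) are even, where b_40(k) denotes the number of 40-regular partitions of k. -/
/-!
Write `f_k = ∏ (1 - X ^ (k n))`. The generating function of the `40`-regular partition numbers is
`f_40 / f_1`, which in characteristic `2` is `f_10 * f_5 ^ 6 / f_1`. Let `f_1 = a + b + c` be the
decomposition by exponents `0, 1, 2` modulo `5` (no others occur), where `b = -X * f_25`.

In characteristic `2`, Gauss's identity `f_2 ^ 2 = f_1 * ∑ X ^ (s (s + 1) / 2)` says that `f_1 ^ 3`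
is a sum over triangular numbers. These are never `2` modulo `5`, whence `a * c = b ^ 2`. The norm
`N` over the fifth roots of unity satisfies `N f_1 * f_25 = f_5 ^ 6`, and `a * c = b ^ 2` gives
`N f_1 = a ^ 5 + b ^ 5 + c ^ 5 = f_1 * M` for an explicit quartic `M` in `a, b, c`. Hence
`f_40 / f_1 = f_10 * f_25 * M`. Both `f_10` and `f_25` are series in `X ^ 5`, and the only term of
`M` with exponents congruent to `4` modulo `5` is `b ^ 4`, so the exponents congruent to `4`
modulo `5` come from `f_10 * f_25 * (X * f_25) ^ 4` and are congruent to `4`, `14` or `24`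
modulo `25`.
-/

namespace RegularPartitions

open Filter Finset PowerSeries
open scoped Pointwise PowerSeries.WithPiTopology Topology

section Continuity

variable {R : Type*} [TopologicalSpace R]

lemma continuous_expand [CommRing R] (k : ℕ) (hk : k ≠ 0) :
    Continuous (expand k hk : R⟦X⟧ →ₐ[R] R⟦X⟧) :=
  continuous_iff_continuousAt.2 fun f =>
    (WithPiTopology.tendsto_iff_coeff_tendsto R _ _ _).2 fun d => by
      simp only [coeff_expand]
      split_ifs
      exacts [(WithPiTopology.continuous_coeff R _).continuousAt, tendsto_const_nhds]

lemma continuous_rescale [CommSemiring R] [ContinuousMul R] (a : R) :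
    Continuous (rescale a : R⟦X⟧ →+* R⟦X⟧) :=
  continuous_iff_continuousAt.2 fun f =>
    (WithPiTopology.tendsto_iff_coeff_tendsto R _ _ _).2 fun d => by
      simp only [coeff_rescale]
      exact ((WithPiTopology.continuous_coeff R d).const_mul _).continuousAt

lemma tendsto_zero_of_X_pow_dvd [CommSemiring R] {f : ℕ → R⟦X⟧} (hf : ∀ n, X ^ n ∣ f n) :
    Tendsto f atTop (𝓝 0) :=
  (WithPiTopology.tendsto_iff_coeff_tendsto R _ _ _).2 fun d =>
    tendsto_atTop_of_eventually_const fun n (hn : d < n) => by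
      rw [X_pow_dvd_iff.1 (hf n) d hn, map_zero]

end Continuity

section EulerProduct

variable (R : Type*) [CommRing R]

/-- The power series `f_k = ∏_{n ≥ 1} (1 - X ^ (k * n))`, in the usual notation of partition theory.
By the pentagonal number theorem it is the pentagonal series in the variable `X ^ k`. -/
noncomputable def eulerProd (k : ℕ) [NeZero k] : R⟦X⟧ :=
  expand k (NeZero.ne k) (pentagonalSeries R)

lemma eulerProd_one : eulerProd R 1 = pentagonalSeries R :=
  expand_one_apply _

lemma hasProd_eulerProd [TopologicalSpace R] (k : ℕ) [NeZero k] :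
    HasProd (fun n => 1 - X ^ (k * (n + 1))) (eulerProd R k) := by
  convert! (WithPiTopology.hasProd_one_sub_X_pow R).map (expand k (NeZero.ne k))
    (continuous_expand k _) using 2 with n
  simp only [Function.comp_apply, map_sub, map_one, map_pow, expand_X, pow_mul]

lemma constantCoeff_eulerProd (k : ℕ) [NeZero k] : constantCoeff (eulerProd R k) = 1 := by
  rw [eulerProd, constantCoeff_expand, ← coeff_zero_eq_constantCoeff_apply,
    ← show pentagonal 0 = 0 from rfl, coeff_pentagonalSeries_pentagonal, Int.negOnePow_zero]
  simp

lemma eulerProd_ne_zero [Nontrivial R] (k : ℕ) [NeZero k] : eulerProd R k ≠ 0 := fun h => by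
  simpa [h] using constantCoeff_eulerProd R k

instance powerSeries_charP (p : ℕ) [CharP R p] : CharP R⟦X⟧ p :=
  charP_of_injective_ringHom C_injective p

lemma eulerProd_mul_char (p k : ℕ) [Fact p.Prime] [CharP R p] [NeZero k] :
    eulerProd R (p * k) = eulerProd R k ^ p := by
  let _ : TopologicalSpace R := ⊥
  have : DiscreteTopology R := ⟨rfl⟩
  refine (hasProd_eulerProd R (p * k)).unique ?_
  convert! (hasProd_eulerProd R k).pow p using 2 with n
  rw [sub_pow_char, one_pow, ← pow_mul]
  ring_nf

end EulerProduct

section GeneratingFunction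

lemma numRegularPartitions_eq_card_countRestricted {m : ℕ} (hm : 0 < m) (n : ℕ) :
    numRegularPartitions m n = #(Nat.Partition.countRestricted n m) := by
  rw [← Nat.Partition.card_restricted_eq_card_countRestricted n hm, numRegularPartitions,
    Nat.card_eq_fintype_card, Fintype.card_subtype, Nat.Partition.restricted]

variable (R : Type*) [CommRing R]

/-- The generating function of the `m`-regular partition numbers. -/
noncomputable def regularPartitionSeries (m : ℕ) : R⟦X⟧ :=
  .mk fun n => (numRegularPartitions m n : R)

lemma hasProd_regularPartitionSeries [TopologicalSpace R] [T2Space R] {m : ℕ} (hm : 0 < m) :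
    HasProd (fun i => ∑ j ∈ range m, X ^ ((i + 1) * j)) (regularPartitionSeries R m) := by
  simpa only [regularPartitionSeries, numRegularPartitions_eq_card_countRestricted hm] using
    Nat.Partition.hasProd_powerSeriesMk_card_countRestricted R hm

lemma regularPartitionSeries_mul_eulerProd_one (m : ℕ) [NeZero m] :
    regularPartitionSeries R m * eulerProd R 1 = eulerProd R m := by
  let _ : TopologicalSpace R := ⊥
  have : DiscreteTopology R := ⟨rfl⟩
  refine ((hasProd_regularPartitionSeries R (NeZero.pos m)).mul (hasProd_eulerProd R 1)).unique ?_
  convert! hasProd_eulerProd R m using 2 with i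
  simp only [pow_mul, one_mul, geom_sum_mul_neg]
  rw [← pow_mul, ← pow_mul, mul_comm]

end GeneratingFunction

section Gauss

/-- The product `∏_{j < k ≤ n} (1 - q ^ (2k)) * ∏_{k ≤ j} (1 - q ^ (2k - 1))` of Shanks' proof of
Gauss's triangular number identity. -/
def shanksProd {S : Type*} [CommRing S] (q : S) (n j : ℕ) : S :=
  (∏ k ∈ Ico j n, (1 - q ^ (2 * k + 2))) * ∏ k ∈ range j, (1 - q ^ (2 * k + 1))

section Shanks

variable {S : Type*} [CommRing S] (q : S)

lemma shanksProd_succ_left {n j : ℕ} (h : j ≤ n) :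
    shanksProd q (n + 1) j = (1 - q ^ (2 * n + 2)) * shanksProd q n j := by
  rw [shanksProd, shanksProd, prod_Ico_succ_top h]
  ring

lemma shanksProd_mul_one_sub {n j : ℕ} (h : j < n) :
    shanksProd q n j * (1 - q ^ (2 * j + 1)) =
      shanksProd q n (j + 1) * (1 - q ^ (2 * j + 2)) := by
  rw [shanksProd, shanksProd, prod_eq_prod_Ico_succ_bot h, prod_range_succ]
  ring

lemma shanksProd_succ_self (n : ℕ) :
    shanksProd q (n + 1) (n + 1) = shanksProd q n n * (1 - q ^ (2 * n + 1)) := by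
  simp only [shanksProd, Ico_self, prod_empty, one_mul, prod_range_succ]

lemma sum_shanksProd_succ_sub (n : ℕ) :
    ∑ j ∈ range n, (shanksProd q (n + 1) j * q ^ (j * (2 * (n + 1) + 1))
        - (1 - q ^ (2 * n + 1)) * (shanksProd q n j * q ^ (j * (2 * n + 1)))) =
      shanksProd q n n * (1 - q ^ (2 * n)) * q ^ (n * (2 * n + 1)) := by
  let u (j : ℕ) : S := shanksProd q n j * (1 - q ^ (2 * j)) * q ^ (j * (2 * n + 1))
  calc _ = ∑ j ∈ range n, (u (j + 1) - u j) := sum_congr rfl fun j hj => by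
        have hj : j < n := mem_range.1 hj
        rw [shanksProd_succ_left q hj.le]
        linear_combination q ^ ((j + 1) * (2 * n + 1)) * shanksProd_mul_one_sub q hj
    _ = u n := (sum_range_sub u n).trans (by simp [u])

lemma sum_shanksProd_mul_pow (n : ℕ) :
    ∑ j ∈ range n, shanksProd q n j * q ^ (j * (2 * n + 1)) =
      shanksProd q n n * ∑ s ∈ range (2 * n), q ^ (s + 1).choose 2 := by
  induction n with
  | zero => simp
  | succ n ih =>
    have telescope := sum_shanksProd_succ_sub q n
    rw [sum_sub_distrib, ← mul_sum, ih, sub_eq_iff_eq_add] at telescope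
    have choose_even : (2 * n + 1).choose 2 = n * (2 * n + 1) := by
      rw [Nat.choose_two_right, Nat.add_sub_cancel, mul_left_comm,
        Nat.mul_div_cancel_left _ two_pos, mul_comm]
    have choose_odd : (2 * n + 1 + 1).choose 2 = (n + 1) * (2 * n + 1) := by
      rw [Nat.choose_succ_succ', choose_even, Nat.choose_one_right]
      ring
    rw [sum_range_succ, telescope, shanksProd_succ_left q le_rfl, shanksProd_succ_self,
      mul_add_one 2 n, sum_range_succ, sum_range_succ, choose_even, choose_odd]
    ring

lemma shanksProd_self_mul_shanksProd_zero (n : ℕ) :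
    shanksProd q n n * shanksProd q n 0 = ∏ k ∈ range (2 * n), (1 - q ^ (k + 1)) := by
  induction n with
  | zero => simp [shanksProd]
  | succ n ih =>
    rw [shanksProd_succ_self, shanksProd_succ_left q n.zero_le, mul_add_one 2 n, prod_range_succ,
      prod_range_succ, ← ih]
    ring

lemma pow_dvd_prod_mul_sum_sub_shanksProd_sq (n : ℕ) :
    q ^ n ∣ (∏ k ∈ range (2 * n), (1 - q ^ (k + 1))) * ∑ s ∈ range (2 * n), q ^ (s + 1).choose 2
      - shanksProd q n 0 ^ 2 := by
  rw [← shanksProd_self_mul_shanksProd_zero, mul_right_comm, ← sum_shanksProd_mul_pow]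
  rcases n with _ | n
  · simp
  rw [sum_range_succ', zero_mul, pow_zero, mul_one, add_mul, sq, add_sub_cancel_right]
  refine (dvd_sum fun j _ => Dvd.dvd.mul_left (pow_dvd_pow q ?_) _).mul_right _
  nlinarith

end Shanks

variable (R : Type*) [CommRing R]

open Classical in
/-- Gauss's series `ψ = ∑_{s ≥ 0} X ^ (s * (s + 1) / 2)`. -/
noncomputable def triangularSeries : R⟦X⟧ :=
  .mk fun n => if n ∈ Set.range fun s : ℕ => (s + 1).choose 2 then 1 else 0

lemma injective_succ_choose_two : Function.Injective fun s : ℕ => (s + 1).choose 2 :=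
  (strictMono_nat_of_lt_succ fun s =>
    (Nat.lt_add_of_pos_left (by simp)).trans_eq (Nat.choose_succ_succ' (s + 1) 1).symm).injective

lemma hasSum_triangularSeries [TopologicalSpace R] :
    HasSum (fun s : ℕ => X ^ (s + 1).choose 2) (triangularSeries R) := by
  have h := (triangularSeries R).hasSum_of_monomials_self
  rw [← injective_succ_choose_two.hasSum_iff fun n hn => by simp [triangularSeries, hn]] at h
  simpa [triangularSeries, Function.comp_def, X_pow_eq] using h

lemma eulerProd_two_sq : eulerProd R 2 ^ 2 = eulerProd R 1 * triangularSeries R := by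
  let _ : TopologicalSpace R := ⊥
  have : DiscreteTopology R := ⟨rfl⟩
  have tendsto_two_mul : Tendsto (fun n : ℕ => 2 * n) atTop atTop :=
    tendsto_id.const_mul_atTop' two_pos
  have tendsto_prod := (hasProd_eulerProd R 1).tendsto_prod_nat.comp tendsto_two_mul
  have tendsto_sum := (hasSum_triangularSeries R).tendsto_sum_nat.comp tendsto_two_mul
  have tendsto_prod_even := (hasProd_eulerProd R 2).tendsto_prod_nat
  have tendsto_error := tendsto_zero_of_X_pow_dvd
    (pow_dvd_prod_mul_sum_sub_shanksProd_sq (X : R⟦X⟧))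
  refine (sub_eq_zero.1 (tendsto_nhds_unique
    ((tendsto_prod.mul tendsto_sum).sub (tendsto_prod_even.pow 2)) ?_)).symm
  simpa [shanksProd, mul_add_one] using tendsto_error

lemma eulerProd_one_pow_three [IsDomain R] [CharP R 2] :
    eulerProd R 1 ^ 3 = triangularSeries R := by
  refine mul_left_cancel₀ (eulerProd_ne_zero R 1) ?_
  rw [← eulerProd_two_sq, eulerProd_mul_char R 2 1]
  ring

end Gauss

lemma two_mul_cast_pentagonal (A : Type*) [Ring A] (k : ℤ) :
    2 * (pentagonal k : A) = k * (3 * k - 1) :=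
  mod_cast congrArg (Int.cast : ℤ → A) (two_mul_natCast_pentagonal k)

/-- All exponents of the power series `f` lie, modulo `m`, in the set `S` of residue classes. -/
def SupportedMod {R : Type*} [Semiring R] (m : ℕ) (S : Finset (ZMod m)) (f : R⟦X⟧) : Prop :=
  ∀ n, coeff n f ≠ 0 → (n : ZMod m) ∈ S

namespace SupportedMod

section Semiring

variable {R : Type*} [Semiring R] {m : ℕ} {S T : Finset (ZMod m)} {f g : R⟦X⟧}

lemma mono (hf : SupportedMod m S f) (h : S ⊆ T) : SupportedMod m T f :=
  fun n hn => h (hf n hn)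

lemma add (hf : SupportedMod m S f) (hg : SupportedMod m S g) : SupportedMod m S (f + g) := by
  intro n hn
  by_contra h
  exact hn (by rw [map_add, not_imp_comm.1 (hf n) h, not_imp_comm.1 (hg n) h, add_zero])

lemma mul (hf : SupportedMod m S f) (hg : SupportedMod m T g) :
    SupportedMod m (S + T) (f * g) := by
  intro n hn
  rw [coeff_mul] at hn
  obtain ⟨⟨i, j⟩, hij, h⟩ := exists_ne_zero_of_sum_ne_zero hn
  rw [← mem_antidiagonal.1 hij, Nat.cast_add]
  exact add_mem_add (hf i (left_ne_zero_of_mul h)) (hg j (right_ne_zero_of_mul h))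

lemma X_pow (k : ℕ) : SupportedMod m {(k : ZMod m)} (X ^ k : R⟦X⟧) := by
  intro n hn
  rw [coeff_X_pow] at hn
  rw [mem_singleton, (ite_ne_right_iff.1 hn).1]

lemma one : SupportedMod m {0} (1 : R⟦X⟧) := by
  simpa using X_pow (R := R) (m := m) 0

lemma pow (hf : SupportedMod m S f) (k : ℕ) : SupportedMod m (k • S) (f ^ k) := by
  induction k with
  | zero => simpa [← singleton_zero] using one (R := R)
  | succ k ih => simpa only [pow_succ, succ_nsmul] using ih.mul hf

lemma coeff_eq_zero (hf : SupportedMod m S f) {n : ℕ} (hn : (n : ZMod m) ∉ S) :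
    coeff n f = 0 :=
  not_imp_comm.1 (hf n) hn

lemma eq_zero_of_disjoint (hS : SupportedMod m S f) (hT : SupportedMod m T f)
    (h : Disjoint S T) : f = 0 := by
  ext n
  by_contra hn
  exact disjoint_left.1 h (hS n hn) (hT n hn)

end Semiring

variable {R : Type*} [CommRing R] {m : ℕ} {S : Finset (ZMod m)} {f g : R⟦X⟧}

lemma neg (hf : SupportedMod m S f) : SupportedMod m S (-f) := fun n hn =>
  hf n (by simpa using hn)

lemma sub (hf : SupportedMod m S f) (hg : SupportedMod m S g) : SupportedMod m S (f - g) :=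
  sub_eq_add_neg f g ▸ hf.add hg.neg

lemma rescale_eq {r : ℕ} (hf : SupportedMod m {(r : ZMod m)} f) {ζ : R} (hζ : ζ ^ m = 1) :
    rescale ζ f = C ζ ^ r * f := by
  ext n
  rw [← map_pow, coeff_rescale, coeff_C_mul]
  by_cases hn : coeff n f = 0
  · simp only [hn, mul_zero]
  · rw [pow_eq_pow_of_modEq ((ZMod.natCast_eq_natCast_iff _ _ _).1 (mem_singleton.1 (hf n hn))) hζ]

lemma eulerProd {k : ℕ} [NeZero k]
    (hS : ∀ j r : ZMod m, 2 * r = j * (3 * j - 1) → k * r ∈ S) :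
    SupportedMod m S (eulerProd R k) := by
  intro n hn
  rw [RegularPartitions.eulerProd, coeff_expand] at hn
  obtain ⟨⟨d, rfl⟩, hd⟩ := ite_ne_right_iff.1 hn
  rw [Nat.mul_div_cancel_left _ (NeZero.pos k)] at hd
  obtain ⟨j, rfl⟩ := not_imp_comm.1 (coeff_pentagonalSeries_eq_zero R) hd
  rw [Nat.cast_mul]
  exact hS j _ (two_mul_cast_pentagonal _ j)

lemma triangularSeries (hS : ∀ s r : ZMod m, 2 * r = s * (s + 1) → r ∈ S) :
    SupportedMod m S (triangularSeries R) := by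
  intro n hn
  rw [RegularPartitions.triangularSeries, coeff_mk] at hn
  obtain ⟨s, rfl⟩ := not_imp_comm.1 (if_neg ·) hn
  have two_mul_triangular : 2 * (s + 1).choose 2 = s * (s + 1) := by
    rw [Nat.choose_two_right, Nat.add_sub_cancel, mul_comm (s + 1),
      Nat.mul_div_cancel' (Nat.even_mul_succ_self s).two_dvd]
  exact hS s _ (mod_cast congrArg (Nat.cast : ℕ → ZMod m) two_mul_triangular)

end SupportedMod

section ResiduePart

/-- The part of the power series `f` formed by the exponents congruent to `r` modulo `m`. -/
noncomputable def residuePart {R : Type*} [Semiring R] (m : ℕ) (r : ZMod m) (f : R⟦X⟧) : R⟦X⟧ :=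
  .mk fun n => if (n : ZMod m) = r then coeff n f else 0

lemma supportedMod_residuePart {R : Type*} [Semiring R] (m : ℕ) (r : ZMod m) (f : R⟦X⟧) :
    SupportedMod m {r} (residuePart m r f) := by
  intro n hn
  rw [residuePart, coeff_mk] at hn
  exact mem_singleton.2 (ite_ne_right_iff.1 hn).1

lemma SupportedMod.sum_residuePart {R : Type*} [Semiring R] {m : ℕ} {S : Finset (ZMod m)}
    {f : R⟦X⟧} (hf : SupportedMod m S f) : ∑ r ∈ S, residuePart m r f = f := by
  ext n
  simp only [residuePart, map_sum, coeff_mk, sum_ite_eq]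
  split_ifs with hn
  exacts [rfl, (hf.coeff_eq_zero hn).symm]

lemma pentagonal_five_mul_neg_add_one (m : ℤ) :
    pentagonal (5 * -m + 1) = 25 * pentagonal m + 1 := by
  zify
  linarith [two_mul_natCast_pentagonal (5 * -m + 1), two_mul_natCast_pentagonal m]

lemma exists_eq_of_pentagonal_eq_one {k : ℤ} (h : (pentagonal k : ZMod 5) = 1) :
    ∃ m : ℤ, k = 5 * -m + 1 := by
  have eq_one : ∀ j : ZMod 5, 2 * 1 = j * (3 * j - 1) → j = 1 := by decide
  have hk : (k : ZMod 5) = (1 : ℤ) := by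
    simpa using eq_one k (h ▸ two_mul_cast_pentagonal (ZMod 5) k)
  obtain ⟨m, hm⟩ := (ZMod.intCast_eq_intCast_iff_dvd_sub _ _ _).1 hk
  exact ⟨m, by push_cast at hm; linarith⟩

variable (R : Type*) [CommRing R]

lemma residuePart_one_eulerProd_one :
    residuePart 5 1 (eulerProd R 1) = -(X * eulerProd R 25) := by
  ext n
  rw [eulerProd_one, residuePart, coeff_mk, eulerProd, map_neg]
  by_cases hn : ∃ m : ℤ, n = 25 * pentagonal m + 1
  · obtain ⟨m, rfl⟩ := hn
    have residue : ((25 * pentagonal m + 1 : ℕ) : ZMod 5) = 1 := by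
      push_cast
      rw [show (25 : ZMod 5) = 0 from rfl, zero_mul, zero_add]
    have sign : (5 * -m + 1).negOnePow = -m.negOnePow := by
      rw [← Int.negOnePow_succ, Int.negOnePow_eq_iff]
      exact ⟨-3 * m, by ring⟩
    rw [if_pos residue, coeff_succ_X_mul, coeff_expand_mul, coeff_pentagonalSeries_pentagonal,
      ← pentagonal_five_mul_neg_add_one, coeff_pentagonalSeries_pentagonal, sign,
      Units.val_neg, Int.cast_neg]
  · have coeff_left : (if (n : ZMod 5) = 1 then coeff n (pentagonalSeries R) else 0) = 0 := by
      refine ite_eq_right_iff.2 fun h => coeff_pentagonalSeries_eq_zero R ?_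
      rintro ⟨k, rfl⟩
      obtain ⟨m, rfl⟩ := exists_eq_of_pentagonal_eq_one h
      exact hn ⟨m, pentagonal_five_mul_neg_add_one m⟩
    rw [coeff_left, eq_comm, neg_eq_zero]
    rcases n with _ | n
    · exact coeff_zero_X_mul _
    rw [coeff_succ_X_mul, coeff_expand]
    refine ite_eq_right_iff.2 ?_
    rintro ⟨d, rfl⟩
    rw [Nat.mul_div_cancel_left _ (by norm_num)]
    exact coeff_pentagonalSeries_eq_zero R fun ⟨m, hm⟩ => hn ⟨m, by rw [hm]⟩

end ResiduePart

section CyclicNorm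

lemma hasProd_ite_dvd {M : Type*} [CommMonoid M] [TopologicalSpace M] {k : ℕ} (hk : 0 < k)
    {F : ℕ → M} {a : M} (h : HasProd (fun j => F (k * (j + 1))) a) :
    HasProd (fun n => if k ∣ n + 1 then F (n + 1) else 1) a := by
  have pred_succ (j : ℕ) : k * (j + 1) - 1 + 1 = k * (j + 1) :=
    Nat.sub_add_cancel (Nat.mul_pos hk j.succ_pos)
  have injective : Function.Injective fun j => k * (j + 1) - 1 := fun i j hij => by
    have := congrArg (· + 1) hij
    simp only [pred_succ] at this
    exact Nat.succ_injective (Nat.eq_of_mul_eq_mul_left hk this)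
  rw [← injective.hasProd_iff fun n hn => if_neg ?_]
  · simpa only [Function.comp_def, pred_succ, dvd_mul_right, if_true] using h
  · rintro ⟨_ | j, hj⟩
    · simp at hj
    · exact hn ⟨j, by simp only [← hj, Nat.add_sub_cancel]⟩

/-- The norm `f ↦ ∏_{i < n} f (ζ ^ i * X)` of a power series; it is used with `ζ` a primitive
`n`-th root of unity. -/
noncomputable def cyclicNorm {R : Type*} [CommSemiring R] (ζ : R) (n : ℕ) : R⟦X⟧ →* R⟦X⟧ :=
  ∏ i ∈ range n, (rescale (ζ ^ i) : R⟦X⟧ →* R⟦X⟧)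

section CommSemiring

variable {R : Type*} [CommSemiring R]

lemma cyclicNorm_apply (ζ : R) (n : ℕ) (f : R⟦X⟧) :
    cyclicNorm ζ n f = ∏ i ∈ range n, rescale (ζ ^ i) f :=
  MonoidHom.finsetProd_apply _ _ _

lemma continuous_cyclicNorm [TopologicalSpace R] [IsTopologicalSemiring R] (ζ : R) (n : ℕ) :
    Continuous (cyclicNorm ζ n) := by
  simpa only [← cyclicNorm_apply] using
    continuous_finsetProd (range n) fun i _ => continuous_rescale (ζ ^ i)

end CommSemiring

variable {R : Type*} [CommRing R]

lemma cyclicNorm_eq_pow {ζ : R} {n : ℕ} (hζ : ζ ^ n = 1) {f : R⟦X⟧}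
    (hf : SupportedMod n {0} f) : cyclicNorm ζ n f = f ^ n := by
  have rescale_eq_self (i : ℕ) : rescale (ζ ^ i) f = f := by
    rw [SupportedMod.rescale_eq (r := 0) (by simpa using hf) (by rw [pow_right_comm, hζ, one_pow]),
      pow_zero, one_mul]
  simp only [cyclicNorm_apply, rescale_eq_self, prod_const, card_range]

variable [IsDomain R]

lemma prod_sub_pow_mul {ζ : R} {n : ℕ} (hζ : IsPrimitiveRoot ζ n) (hn : 0 < n) (x y : R) :
    ∏ i ∈ range n, (x - ζ ^ i * y) = x ^ n - y ^ n := by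
  simpa [Polynomial.eval_prod] using
    (congrArg (Polynomial.eval x) (X_pow_sub_C_eq_prod hζ hn rfl)).symm

lemma cyclicNorm_sub {ζ : R} {n r : ℕ} (hζ : IsPrimitiveRoot ζ n) (hn : 0 < n)
    (hr : r.Coprime n) {f g : R⟦X⟧} (hf : SupportedMod n {0} f)
    (hg : SupportedMod n {(r : ZMod n)} g) :
    cyclicNorm ζ n (f - g) = f ^ n - g ^ n := by
  have hC : IsPrimitiveRoot ((C ζ : R⟦X⟧) ^ r) n :=
    (hζ.map_of_injective C_injective).pow_of_coprime r hr
  rw [← prod_sub_pow_mul hC hn, cyclicNorm_apply]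
  refine prod_congr rfl fun i _ => ?_
  have hi : (ζ ^ i) ^ n = 1 := by rw [pow_right_comm, hζ.pow_eq_one, one_pow]
  rw [map_sub, SupportedMod.rescale_eq (r := 0) (by simpa using hf) hi, hg.rescale_eq hi, pow_zero,
    one_mul, map_pow, pow_right_comm]

lemma cyclicNorm_one_sub_X_pow {ζ : R} {p : ℕ} [Fact p.Prime] (hζ : IsPrimitiveRoot ζ p) (k : ℕ) :
    cyclicNorm ζ p (1 - X ^ k) = if p ∣ k then (1 - X ^ k) ^ p else 1 - X ^ (p * k) := by
  have hp : p.Prime := Fact.out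
  have supp_X_pow := SupportedMod.X_pow (R := R) (m := p) k
  split_ifs with h
  · rw [(ZMod.natCast_eq_zero_iff k p).2 h] at supp_X_pow
    exact cyclicNorm_eq_pow hζ.pow_eq_one (.sub .one supp_X_pow)
  · rw [cyclicNorm_sub hζ hp.pos ((hp.coprime_iff_not_dvd.2 h).symm) SupportedMod.one supp_X_pow,
      one_pow, ← pow_mul, mul_comm]

lemma cyclicNorm_eulerProd_one_mul {ζ : R} {p : ℕ} [Fact p.Prime] (hζ : IsPrimitiveRoot ζ p) :
    cyclicNorm ζ p (eulerProd R 1) * eulerProd R (p * p) = eulerProd R p ^ (p + 1) := by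
  let _ : TopologicalSpace R := ⊥
  have : DiscreteTopology R := ⟨rfl⟩
  have hp : 0 < p := NeZero.pos p
  have hasProd_norm := (hasProd_eulerProd R 1).map (cyclicNorm ζ p) (continuous_cyclicNorm ζ p)
  have hasProd_sq := hasProd_ite_dvd hp (F := fun k => (1 - X ^ (p * k) : R⟦X⟧))
    (by simpa only [mul_assoc] using hasProd_eulerProd R (p * p))
  have hasProd_pow := hasProd_ite_dvd hp (F := fun k => ((1 - X ^ k) ^ p : R⟦X⟧))
    ((hasProd_eulerProd R p).pow p)
  refine (hasProd_norm.mul hasProd_sq).unique ?_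
  rw [pow_succ]
  convert! hasProd_pow.mul (hasProd_eulerProd R p) using 2 with n
  rw [Function.comp_apply, one_mul, cyclicNorm_one_sub_X_pow hζ]
  split_ifs
  exacts [rfl, mul_comm _ _]

end CyclicNorm

section FiveDissection

lemma cyclicNorm_add_add {R : Type*} [CommRing R] [IsDomain R] {ζ : R} {n : ℕ}
    (hζ : IsPrimitiveRoot ζ n) (hn : 0 < n) (h3 : Nat.Coprime 3 n) {a b c : R⟦X⟧}
    (ha : SupportedMod n {0} a) (hb : SupportedMod n {1} b)
    (hac : a * c = b ^ 2) (ha₀ : a ≠ 0) (hab : a ^ n ≠ b ^ n) :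
    cyclicNorm ζ n (a + b + c) = a ^ n + b ^ n + c ^ n := by
  -- The norms of `a`, `a - b` and `a ^ 3 - b ^ 3` are known; `factor` relates them to `a + b + c`.
  have norm_a : cyclicNorm ζ n a = a ^ n := cyclicNorm_eq_pow hζ.pow_eq_one ha
  have norm_sub : cyclicNorm ζ n (a - b) = a ^ n - b ^ n :=
    cyclicNorm_sub hζ hn n.coprime_one_left ha (by simpa using hb)
  have norm_sub_cube : cyclicNorm ζ n (a ^ 3 - b ^ 3) = (a ^ 3) ^ n - (b ^ 3) ^ n :=
    cyclicNorm_sub hζ hn h3 (by simpa using ha.pow 3) (by simpa using hb.pow 3)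
  have factor : a ^ 3 - b ^ 3 = (a - b) * (a * (a + b + c)) := by
    linear_combination (b - a) * hac
  have hac_pow : a ^ n * c ^ n = (b ^ n) ^ 2 := by rw [← mul_pow, hac, pow_right_comm]
  rw [factor, map_mul, map_mul, norm_a, norm_sub, pow_right_comm a, pow_right_comm b]
    at norm_sub_cube
  refine mul_left_cancel₀ (pow_ne_zero n ha₀) (mul_left_cancel₀ (sub_ne_zero.2 hab) ?_)
  linear_combination norm_sub_cube - (a ^ n - b ^ n) * hac_pow

/-- For `a * c = b ^ 2`, the sum `a ^ 5 + b ^ 5 + c ^ 5` is `a + b + c` times a quartic form; this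
is that form without its term `-b ^ 4`, the only one with exponents congruent to `4` modulo `5`
when `a`, `b`, `c` have exponents congruent to `0`, `1`, `2`. -/
def quarticRemainder {S : Type*} [CommRing S] (a b c : S) : S :=
  a ^ 4 - a ^ 3 * b + a * b ^ 3 + b ^ 3 * c - b * c ^ 3 + c ^ 4

lemma add_add_mul_quarticRemainder_sub {S : Type*} [CommRing S] {a b c : S}
    (hac : a * c = b ^ 2) :
    (a + b + c) * (quarticRemainder a b c - b ^ 4) = a ^ 5 + b ^ 5 + c ^ 5 := by
  rw [quarticRemainder]
  linear_combination (a ^ 3 - a ^ 2 * b + 2 * b ^ 3 - b * c ^ 2 + c ^ 3) * hac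

lemma supportedMod_quarticRemainder {R : Type*} [CommRing R] {a b c : R⟦X⟧}
    (ha : SupportedMod 5 {0} a) (hb : SupportedMod 5 {1} b) (hc : SupportedMod 5 {2} c) :
    SupportedMod 5 {0, 1, 2, 3} (quarticRemainder a b c) := by
  refine .add (.sub (.add (.add (.sub ?_ ?_) ?_) ?_) ?_) ?_
  · exact (ha.pow 4).mono (by decide)
  · exact ((ha.pow 3).mul hb).mono (by decide)
  · exact (ha.mul (hb.pow 3)).mono (by decide)
  · exact ((hb.pow 3).mul hc).mono (by decide)
  · exact (hb.mul (hc.pow 3)).mono (by decide)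
  · exact (hc.pow 4).mono (by decide)

lemma mul_eq_sq_of_supportedMod_cube {R : Type*} [CommRing R] [IsDomain R] [CharP R 2]
    {a b c : R⟦X⟧} (ha : SupportedMod 5 {0} a) (hb : SupportedMod 5 {1} b)
    (hc : SupportedMod 5 {2} c) (ha₀ : a ≠ 0)
    (hcube : SupportedMod 5 {0, 1, 3, 4} ((a + b + c) ^ 3)) : a * c = b ^ 2 := by
  have supp_two : SupportedMod 5 {2} (a * (a * c + b ^ 2)) :=
    (ha.mul (((ha.mul hc).mono (by decide)).add (hb.pow 2))).mono (by decide)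
  have supp_ne_two : SupportedMod 5 {0, 1, 3, 4} (a * (a * c + b ^ 2)) := by
    have expand_cube : a * (a * c + b ^ 2) = (a + b + c) ^ 3 + (a ^ 3 + a ^ 2 * b + b ^ 3 +
        b ^ 2 * c + a * c ^ 2 + b * c ^ 2 + c ^ 3) := by
      linear_combination (-a ^ 3 - 2 * a ^ 2 * b - a ^ 2 * c - a * b ^ 2 - 3 * a * b * c
        - b ^ 3 - 2 * b ^ 2 * c - 2 * a * c ^ 2 - 2 * b * c ^ 2 - c ^ 3) *
        CharTwo.two_eq_zero (R := R⟦X⟧)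
    rw [expand_cube]
    refine hcube.add (.add (.add (.add (.add (.add (.add ?_ ?_) ?_) ?_) ?_) ?_) ?_)
    · exact (ha.pow 3).mono (by decide)
    · exact ((ha.pow 2).mul hb).mono (by decide)
    · exact (hb.pow 3).mono (by decide)
    · exact ((hb.pow 2).mul hc).mono (by decide)
    · exact (ha.mul (hc.pow 2)).mono (by decide)
    · exact (hb.mul (hc.pow 2)).mono (by decide)
    · exact (hc.pow 3).mono (by decide)
  have := supp_two.eq_zero_of_disjoint supp_ne_two (by decide)
  exact CharTwo.add_eq_zero.1 ((mul_eq_zero.1 this).resolve_left ha₀)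

variable (R : Type*) [CommRing R]

/-- The part of the `5`-dissection of `f_1` with exponents congruent to `r` modulo `5`. -/
noncomputable def eulerPart (r : ZMod 5) : R⟦X⟧ :=
  residuePart 5 r (eulerProd R 1)

lemma supportedMod_eulerPart (r : ZMod 5) : SupportedMod 5 {r} (eulerPart R r) :=
  supportedMod_residuePart 5 r _

lemma eulerPart_add_eulerPart_add_eulerPart :
    eulerPart R 0 + eulerPart R 1 + eulerPart R 2 = eulerProd R 1 := by
  have supp : SupportedMod 5 {0, 1, 2} (eulerProd R 1) := .eulerProd (by decide)
  rw [← supp.sum_residuePart, sum_insert (by decide), sum_insert (by decide), sum_singleton,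
    add_assoc]
  rfl

lemma supportedMod_eulerPart_one : SupportedMod 25 {1} (eulerPart R 1) := by
  have supp_X : SupportedMod 25 {1} (X : R⟦X⟧) := by simpa using SupportedMod.X_pow (R := R) 1
  have supp_eulerProd : SupportedMod 25 {0} (eulerProd R 25) := .eulerProd (by decide)
  rw [eulerPart, residuePart_one_eulerProd_one]
  exact ((supp_X.mul supp_eulerProd).mono (by decide)).neg

lemma constantCoeff_eulerPart_zero : constantCoeff (eulerPart R 0) = 1 := by
  simpa [eulerPart, residuePart] using constantCoeff_eulerProd R 1

variable [IsDomain R] [CharP R 2]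

lemma eulerPart_zero_mul_eulerPart_two : eulerPart R 0 * eulerPart R 2 = eulerPart R 1 ^ 2 := by
  refine mul_eq_sq_of_supportedMod_cube (supportedMod_eulerPart R 0) (supportedMod_eulerPart R 1)
    (supportedMod_eulerPart R 2) (fun h => ?_) ?_
  · simpa [h] using constantCoeff_eulerPart_zero R
  · rw [eulerPart_add_eulerPart_add_eulerPart, eulerProd_one_pow_three]
    exact .triangularSeries (by decide)

variable {R} in
lemma cyclicNorm_eulerProd_one {ζ : R} (hζ : IsPrimitiveRoot ζ 5) :
    cyclicNorm ζ 5 (eulerProd R 1) = eulerPart R 0 ^ 5 + eulerPart R 1 ^ 5 + eulerPart R 2 ^ 5 := by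
  have constantCoeff_b : constantCoeff (eulerPart R 1) = 0 := by
    simpa using (supportedMod_eulerPart R 1).coeff_eq_zero (n := 0) (by decide)
  rw [← eulerPart_add_eulerPart_add_eulerPart]
  refine cyclicNorm_add_add hζ (by norm_num) (by norm_num) (supportedMod_eulerPart R 0)
    (supportedMod_eulerPart R 1) (eulerPart_zero_mul_eulerPart_two R) (fun h => ?_) (fun h => ?_)
  · simpa [h] using constantCoeff_eulerPart_zero R
  · simpa [constantCoeff_b, constantCoeff_eulerPart_zero] using congrArg constantCoeff h

end FiveDissection

section FortyRegular

variable {R : Type*} [CommRing R] [IsDomain R] [CharP R 2] {ζ : R}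

lemma regularPartitionSeries_forty (hζ : IsPrimitiveRoot ζ 5) :
    regularPartitionSeries R 40 = eulerProd R 10 * eulerProd R 25 *
      (quarticRemainder (eulerPart R 0) (eulerPart R 1) (eulerPart R 2) - eulerPart R 1 ^ 4) := by
  have : Fact (Nat.Prime 5) := ⟨Nat.prime_five⟩
  have f_ten : eulerProd R 10 = eulerProd R 5 ^ 2 := eulerProd_mul_char R 2 5
  have f_forty : eulerProd R 40 = eulerProd R 10 * eulerProd R 5 ^ 6 := by
    have f_twenty : eulerProd R 20 = eulerProd R 10 ^ 2 := eulerProd_mul_char R 2 10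
    have h : eulerProd R 40 = eulerProd R 20 ^ 2 := eulerProd_mul_char R 2 20
    rw [h, f_twenty, f_ten]
    ring
  have norm_mul : cyclicNorm ζ 5 (eulerProd R 1) * eulerProd R 25 = eulerProd R 5 ^ 6 :=
    cyclicNorm_eulerProd_one_mul hζ
  refine mul_right_cancel₀ (eulerProd_ne_zero R 1) ?_
  rw [regularPartitionSeries_mul_eulerProd_one, f_forty, ← norm_mul, cyclicNorm_eulerProd_one hζ,
    ← add_add_mul_quarticRemainder_sub (eulerPart_zero_mul_eulerPart_two R),
    eulerPart_add_eulerPart_add_eulerPart]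
  ring

lemma coeff_regularPartitionSeries_forty (hζ : IsPrimitiveRoot ζ 5) {n : ℕ}
    (hn : n % 25 = 9 ∨ n % 25 = 19) : coeff n (regularPartitionSeries R 40) = 0 := by
  have hn₅ : (n : ZMod 5) = (4 : ℕ) := (ZMod.natCast_eq_natCast_iff' n 4 5).2 (by omega)
  have hn₂₅ : (n : ZMod 25) = (9 : ℕ) ∨ (n : ZMod 25) = (19 : ℕ) := by
    simpa only [ZMod.natCast_eq_natCast_iff'] using hn
  have supp_fourth : SupportedMod 25 {4, 14, 24}
      (eulerProd R 10 * eulerProd R 25 * eulerPart R 1 ^ 4) := by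
    have supp_ten : SupportedMod 25 {0, 10, 20} (eulerProd R 10) := .eulerProd (by decide)
    have supp_twentyFive : SupportedMod 25 {0} (eulerProd R 25) := .eulerProd (by decide)
    exact ((supp_ten.mul supp_twentyFive).mul ((supportedMod_eulerPart_one R).pow 4)).mono
      (by decide)
  have supp_rest : SupportedMod 5 {0, 1, 2, 3} (eulerProd R 10 * eulerProd R 25 *
      quarticRemainder (eulerPart R 0) (eulerPart R 1) (eulerPart R 2)) := by
    have supp_ten : SupportedMod 5 {0} (eulerProd R 10) := .eulerProd (by decide)
    have supp_twentyFive : SupportedMod 5 {0} (eulerProd R 25) := .eulerProd (by decide)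
    exact ((supp_ten.mul supp_twentyFive).mul (supportedMod_quarticRemainder
      (supportedMod_eulerPart R 0) (supportedMod_eulerPart R 1)
      (supportedMod_eulerPart R 2))).mono (by decide)
  rw [regularPartitionSeries_forty hζ, mul_sub, map_sub, supp_rest.coeff_eq_zero,
    supp_fourth.coeff_eq_zero, sub_zero]
  · rcases hn₂₅ with h | h <;> rw [h] <;> decide
  · rw [hn₅]; decide

lemma even_numRegularPartitions_forty {n : ℕ} (hn : n % 25 = 9 ∨ n % 25 = 19) :
    Even (numRegularPartitions 40 n) := by
  have : NeZero ((5 : ℕ) : ZMod 2) := ⟨by decide⟩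
  have : CharP (CyclotomicField 5 (ZMod 2)) 2 := charP_of_injective_algebraMap' (ZMod 2) 2
  have coeff_eq_zero := coeff_regularPartitionSeries_forty
    (IsCyclotomicExtension.zeta_spec 5 (ZMod 2) (CyclotomicField 5 (ZMod 2))) hn
  rwa [regularPartitionSeries, coeff_mk, CharP.cast_eq_zero_iff _ 2, ← even_iff_two_dvd]
    at coeff_eq_zero

end FortyRegular

end RegularPartitions

theorem stmt_13 (n : ℕ) :
    Even (numRegularPartitions 40 (25 * n + 9)) ∧
    Even (numRegularPartitions 40 (25 * n + 19)) :=
  ⟨RegularPartitions.even_numRegularPartitions_forty (by omega),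
    RegularPartitions.even_numRegularPartitions_forty (by omega)⟩
end
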